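/- A blur shift space Σ_Λ, with the subspace topology inherited from the full blur shift Σ, is second countable if and only if both B_1(Λ) and V_Λ = {H ∈ V : B_1(Λ) ∩ H is infinite} are countable. -/

import Mathlib

open Set Filter Topology

namespace BlurPaper

/-- The extended alphabet `Ā = A ⊕ V`, where each blurred set `H ∈ V` is regarded
as a new symbol `H̃`. -/
abbrev Symb (A : Type*) (V : Set (Set A)) := A ⊕ {H : Set A // H ∈ V}

/-- `V` is a family of blurred sets: every member is infinite and two distinct members
have finite intersection. -/
def IsBlurFamily {A : Type*} (V : Set (Set A)) : Prop :=
  (∀ H ∈ V, H.Infinite) ∧ ∀ G ∈ V, ∀ H ∈ V, G ≠ H → (G ∩ H).Finite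

/-- The full blur shift `Σ`: sequences over `Ā` such that a blur symbol is followed
by the same blur symbol. -/
def FullBlur (A : Type*) (V : Set (Set A)) : Set (ℕ → Symb A V) :=
  {x | ∀ (i : ℕ) (H : {H : Set A // H ∈ V}), x i = Sum.inr H → x (i + 1) = Sum.inr H}

/-- Generalized cylinder `Z(α)`. -/
def Z (A : Type*) (V : Set (Set A)) (α : List A) : Set (FullBlur A V) :=
  {x | ∀ i : Fin α.length, x.1 i = Sum.inl (α.get i)}

/-- Generalized cylinder `Z(α, H, F)`. -/
def ZH (A : Type*) (V : Set (Set A)) (α : List A) (H : {H : Set A // H ∈ V})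
    (F : Set A) : Set (FullBlur A V) :=
  {x | (∀ i : Fin α.length, x.1 i = Sum.inl (α.get i)) ∧
    (x.1 α.length = Sum.inr H ∨ ∃ a ∈ H.1 \ F, x.1 α.length = Sum.inl a)}

/-- The collection of all generalized cylinders. -/
def Cylinders (A : Type*) (V : Set (Set A)) : Set (Set (FullBlur A V)) :=
  {U | ∃ α : List A, U = Z A V α} ∪
  {U | ∃ (α : List A) (H : {H : Set A // H ∈ V}) (F : Set A),
    F ⊆ H.1 ∧ F.Finite ∧ U = ZH A V α H F}

/-- The topology on the full blur shift generated by the generalized cylinders. -/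
def tau (A : Type*) (V : Set (Set A)) : TopologicalSpace (FullBlur A V) :=
  TopologicalSpace.generateFrom (Cylinders A V)

/-- The shift map on the full blur shift. -/
def shift (A : Type*) (V : Set (Set A)) : FullBlur A V → FullBlur A V :=
  fun x => ⟨fun i => x.1 (i + 1), fun i H h => x.2 (i + 1) H h⟩

/-- The shift map on `A^ℕ`. -/
def shiftSeq (A : Type*) : (ℕ → A) → ℕ → A := fun x i => x (i + 1)

/-- The prodiscrete topology on `A^ℕ` (product of discrete topologies). -/
def prodDiscrete (A : Type*) : TopologicalSpace (ℕ → A) :=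
  @Pi.topologicalSpace ℕ (fun _ => A) fun _ => ⊥

/-- A (classical) shift space over `A`: closed in the prodiscrete topology and
invariant under the shift map. -/
def IsShiftSpace {A : Type*} (Λ : Set (ℕ → A)) : Prop :=
  @IsClosed _ (prodDiscrete A) Λ ∧ ∀ x ∈ Λ, shiftSeq A x ∈ Λ

/-- `w ∈ B(Y)`: the finite word `w` appears as an initial word of some element of `Y`. -/
def InLang {A : Type*} (Y : Set (ℕ → A)) (w : List A) : Prop :=
  ∃ x ∈ Y, ∀ i : Fin w.length, x i = w.get i

/-- The follower set `F_Y(w) = {a : w a ∈ B(Y)}`. -/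
def Fol {A : Type*} (Y : Set (ℕ → A)) (w : List A) : Set A :=
  {a | InLang Y (w ++ [a])}

/-- The predecessor set `P_Y(a) = {b : b a ∈ B(Y)}`. -/
def Pred {A : Type*} (Y : Set (ℕ → A)) (a : A) : Set A :=
  {b | InLang Y [b, a]}

/-- `B₁(Y)`: the set of letters occurring in sequences of `Y`. -/
def letters {A : Type*} (Y : Set (ℕ → A)) : Set A :=
  {a | ∃ x ∈ Y, ∃ i, x i = a}

/-- The canonical embedding `A^ℕ → Σ`. -/
def embed (A : Type*) (V : Set (Set A)) : (ℕ → A) → FullBlur A V :=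
  fun x => ⟨fun i => Sum.inl (x i), fun _ _ h => absurd h (by simp)⟩

/-- The point `(a₀ … a_{n-1} H̃ H̃ H̃ …)` of the full blur shift. -/
def wordBlur {A : Type*} {V : Set (Set A)} (α : List A) (H : {H : Set A // H ∈ V}) :
    FullBlur A V :=
  ⟨fun i => if h : i < α.length then Sum.inl (α.get ⟨i, h⟩) else Sum.inr H, by
    intro i K hK
    by_cases h : i < α.length
    · simp only [dif_pos h] at hK
      exact absurd hK (by simp)
    · simp only [dif_neg h] at hK
      simp only [dif_neg (by omega : ¬ i + 1 < α.length)]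
      exact hK⟩

/-- The boundary `∂Y`: points `(a₀ … a_{n-1} H̃ H̃ …)` with `a₀ … a_{n-1} ∈ B(Y)` and
`F_Y(a₀ … a_{n-1}) ∩ H` infinite. -/
def boundary (A : Type*) (V : Set (Set A)) (Y : Set (ℕ → A)) : Set (FullBlur A V) :=
  {z | ∃ (α : List A) (H : {H : Set A // H ∈ V}),
    z = wordBlur α H ∧ InLang Y α ∧ (Fol Y α ∩ H.1).Infinite}

/-- The blur shift space `Σ_Y = Y ∪ ∂Y` of `Y` with resolution `V`. -/
def SigmaOf (A : Type*) (V : Set (Set A)) (Y : Set (ℕ → A)) : Set (FullBlur A V) :=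
  embed A V '' Y ∪ boundary A V Y

/-- The subspace topology inherited from the full blur shift. -/
def subTau (A : Type*) (V : Set (Set A)) (X : Set (FullBlur A V)) :
    TopologicalSpace X :=
  TopologicalSpace.induced Subtype.val (tau A V)

/-- `V_Λ`: the blurred sets that appear in `Σ_Λ`, i.e. those meeting `B₁(Λ)` in an
infinite set. -/
def VLam (A : Type*) (V : Set (Set A)) (Λ : Set (ℕ → A)) : Set (Set A) :=
  {H | H ∈ V ∧ (letters Λ ∩ H).Infinite}


theorem countable_of_sep {X ι : Type*} [TopologicalSpace X] [SecondCountableTopology X]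
    (f : ι → X) (O : ι → Set X) (hO : ∀ i, IsOpen (O i)) (hf : ∀ i, f i ∈ O i)
    (h : ∀ i j, f i ∈ O j → i = j) : Countable ι := by
  have hb := TopologicalSpace.isBasis_countableBasis X
  choose B hB hfB hBO using fun i => hb.exists_subset_of_mem_open (hf i) (hO i)
  have := (TopologicalSpace.countable_countableBasis X).to_subtype
  refine Function.Injective.countable
    (f := fun i => (⟨B i, hB i⟩ : TopologicalSpace.countableBasis X)) ?_
  intro i j hij
  have hij' : B i = B j := congrArg Subtype.val hij
  exact h i j (hBO j (hij' ▸ hfB i))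

theorem mem_letters_of_inLang {A : Type*} {Λ : Set (ℕ → A)} {w : List A} (h : InLang Λ w)
    {a : A} (ha : a ∈ w) : a ∈ letters Λ := by
  obtain ⟨x, hx, hw⟩ := h
  obtain ⟨i, hi⟩ := List.get_of_mem ha
  exact ⟨x, hx, i, by rw [hw i, hi]⟩

theorem mem_letters_of_inl {A : Type*} {V : Set (Set A)} {Λ : Set (ℕ → A)}
    {x : FullBlur A V} (hx : x ∈ SigmaOf A V Λ) {i : ℕ} {a : A} (h : x.1 i = Sum.inl a) :
    a ∈ letters Λ := by
  rcases hx with ⟨y, hy, rfl⟩ | ⟨α, H, rfl, hα, hF⟩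
  · exact ⟨y, hy, i, Sum.inl_injective h⟩
  · by_cases hi : i < α.length
    · simp only [wordBlur, dif_pos hi] at h
      exact mem_letters_of_inLang hα (Sum.inl_injective h ▸ List.get_mem _ _)
    · simp only [wordBlur, dif_neg hi] at h
      cases h

theorem mem_VLam_of_inr {A : Type*} {V : Set (Set A)} {Λ : Set (ℕ → A)}
    {x : FullBlur A V} (hx : x ∈ SigmaOf A V Λ) {i : ℕ} {H : {H : Set A // H ∈ V}}
    (h : x.1 i = Sum.inr H) : H.1 ∈ VLam A V Λ := by
  rcases hx with ⟨y, hy, rfl⟩ | ⟨α, K, rfl, hα, hF⟩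
  · cases h
  · by_cases hi : i < α.length
    · simp only [wordBlur, dif_pos hi] at h
      cases h
    · simp only [wordBlur, dif_neg hi] at h
      obtain rfl := Sum.inr_injective h
      refine ⟨K.2, hF.mono ?_⟩
      rintro a ⟨ha, haK⟩
      exact ⟨mem_letters_of_inLang ha (by simp), haK⟩

theorem isOpen_Z {A : Type*} {V : Set (Set A)} (X : Set (FullBlur A V)) (α : List A) :
    IsOpen[subTau A V X] (Subtype.val ⁻¹' Z A V α) :=
  ⟨_, TopologicalSpace.isOpen_generateFrom_of_mem (Or.inl ⟨α, rfl⟩), rfl⟩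

theorem isOpen_ZH {A : Type*} {V : Set (Set A)} (X : Set (FullBlur A V)) (α : List A)
    (H : {H : Set A // H ∈ V}) (F : Set A) (h : F ⊆ H.1) (hF : F.Finite) :
    IsOpen[subTau A V X] (Subtype.val ⁻¹' ZH A V α H F) :=
  ⟨_, TopologicalSpace.isOpen_generateFrom_of_mem (Or.inr ⟨α, H, F, h, hF, rfl⟩), rfl⟩

theorem exists_head {A : Type*} {Λ : Set (ℕ → A)} (hΛ : IsShiftSpace Λ) {a : A}
    (ha : a ∈ letters Λ) : ∃ x ∈ Λ, x 0 = a := by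
  obtain ⟨x, hx, i, rfl⟩ := ha
  induction i generalizing x with
  | zero => exact ⟨x, hx, rfl⟩
  | succ n ih => exact ih (shiftSeq A x) (hΛ.2 x hx)

theorem mem_Z_append {A : Type*} {V : Set (Set A)} (x : FullBlur A V) (α : List A) (a : A) :
    x ∈ Z A V (α ++ [a]) ↔ x ∈ Z A V α ∧ x.1 α.length = Sum.inl a := by
  constructor
  · intro h
    refine ⟨fun i => ?_, ?_⟩
    · have := h ⟨i, by rw [List.length_append]; omega⟩
      simpa [List.getElem_append_left] using this
    · have := h ⟨α.length, by simp⟩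
      simpa using this
  · rintro ⟨h1, h2⟩ ⟨i, hi⟩
    simp only [List.length_append, List.length_singleton] at hi
    by_cases h : i < α.length
    · have := h1 ⟨i, h⟩
      simpa [List.getElem_append_left h] using this
    · obtain rfl : i = α.length := by omega
      simpa using h2

theorem secondCountable_of {A : Type*} (V : Set (Set A)) (Λ : Set (ℕ → A))
    (h1 : (letters Λ).Countable) (h2 : (VLam A V Λ).Countable) :
    @SecondCountableTopology (SigmaOf A V Λ) (subTau A V (SigmaOf A V Λ)) := by
  have := h1.to_subtype
  have := h2.to_subtype
  let S1 : List (letters Λ) → Set (SigmaOf A V Λ) :=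
    fun α => Subtype.val ⁻¹' Z A V (α.map Subtype.val)
  let S2 : List (letters Λ) × VLam A V Λ × Finset (letters Λ) → Set (SigmaOf A V Λ) :=
    fun p => Subtype.val ⁻¹' ZH A V (p.1.map Subtype.val) ⟨p.2.1.1, p.2.1.2.1⟩
      (Subtype.val '' (p.2.2 : Set (letters Λ)) ∩ p.2.1.1)
  let S := range S1 ∪ range S2
  refine @SecondCountableTopology.mk _ (subTau A V (SigmaOf A V Λ))
    ⟨S, (countable_range _).union (countable_range _), le_antisymm ?_ ?_⟩
  · refine le_generateFrom ?_
    rintro _ (⟨α, rfl⟩ | ⟨p, rfl⟩)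
    · exact isOpen_Z _ _
    · exact isOpen_ZH _ _ _ _ inter_subset_right
        (((Finset.finite_toSet _).image _).inter_of_left _)
  · have hZ : ∀ α : List A, IsOpen[TopologicalSpace.generateFrom S]
        ((Subtype.val : SigmaOf A V Λ → _) ⁻¹' Z A V α) := by
      intro α
      by_cases hα : ∀ a ∈ α, a ∈ letters Λ
      · lift α to List (letters Λ) using hα
        exact TopologicalSpace.isOpen_generateFrom_of_mem (Or.inl ⟨α, rfl⟩)
      · push Not at hα
        obtain ⟨a, ha, hn⟩ := hα
        convert @isOpen_empty _ (TopologicalSpace.generateFrom S)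
        refine eq_empty_of_forall_notMem fun x hx => hn ?_
        obtain ⟨i, rfl⟩ := List.get_of_mem ha
        exact mem_letters_of_inl x.2 (hx i)
    unfold subTau tau
    rw [induced_generateFrom_eq]
    refine le_generateFrom ?_
    rintro _ ⟨_, ⟨α, rfl⟩ | ⟨α, H, F, hFH, hF, rfl⟩, rfl⟩
    · exact hZ α
    by_cases hH : H.1 ∈ VLam A V Λ
    · by_cases hα : ∀ a ∈ α, a ∈ letters Λ
      · lift α to List (letters Λ) using hα
        have hF' : (Subtype.val ⁻¹' F : Set (letters Λ)).Finite :=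
          hF.preimage Subtype.val_injective.injOn
        refine TopologicalSpace.isOpen_generateFrom_of_mem
          (Or.inr ⟨⟨α, ⟨H.1, hH⟩, hF'.toFinset⟩, ?_⟩)
        ext x
        refine and_congr_right fun _ => or_congr_right ?_
        refine exists_congr fun a => and_congr_left fun ha => ?_
        have hl := mem_letters_of_inl x.2 ha
        simp only [mem_diff, mem_inter_iff, mem_image, Finite.coe_toFinset, mem_preimage,
          Subtype.exists, exists_and_left, exists_prop]
        constructor
        · rintro ⟨h1, h2⟩
          exact ⟨h1, fun h => h2 ⟨⟨a, h, hl, rfl⟩, h1⟩⟩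
        · rintro ⟨h1, h2⟩
          refine ⟨h1, ?_⟩
          rintro ⟨⟨b, hb, _, rfl⟩, _⟩
          exact h2 hb
      · push Not at hα
        obtain ⟨a, ha, hn⟩ := hα
        convert @isOpen_empty _ (TopologicalSpace.generateFrom S)
        refine eq_empty_of_forall_notMem fun x hx => hn ?_
        obtain ⟨i, rfl⟩ := List.get_of_mem ha
        exact mem_letters_of_inl x.2 (hx.1 i)
    · have : ((Subtype.val : SigmaOf A V Λ → _) ⁻¹' ZH A V α H F) =
          ⋃ a ∈ H.1 \ F, (Subtype.val : SigmaOf A V Λ → _) ⁻¹' Z A V (α ++ [a]) := by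
        ext x
        simp only [mem_iUnion, mem_preimage, mem_Z_append, exists_prop]
        constructor
        · rintro ⟨h1, h2 | ⟨a, ha, h2⟩⟩
          · exact absurd (mem_VLam_of_inr x.2 h2) hH
          · exact ⟨a, ha, h1, h2⟩
        · rintro ⟨a, ha, h1, h2⟩
          exact ⟨h1, Or.inr ⟨a, ha, h2⟩⟩
      rw [this]
      letI := TopologicalSpace.generateFrom S
      exact isOpen_biUnion fun a _ => hZ _

theorem empty_blur_mem {A : Type*} {V : Set (Set A)} {Λ : Set (ℕ → A)} (hΛ : IsShiftSpace Λ)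
    (H : VLam A V Λ) : wordBlur [] ⟨H.1, H.2.1⟩ ∈ SigmaOf A V Λ := by
  refine Or.inr ⟨[], ⟨H.1, H.2.1⟩, rfl, ?_, H.2.2.mono ?_⟩
  · obtain ⟨a, ⟨x, hx, -⟩, -⟩ := H.2.2.nonempty
    exact ⟨x, hx, fun i => i.elim0⟩
  · rintro a ⟨ha, haH⟩
    obtain ⟨x, hx, h0⟩ := exists_head hΛ ha
    refine ⟨⟨x, hx, ?_⟩, haH⟩
    rintro ⟨i, hi⟩
    obtain rfl : i = 0 := by simpa using hi
    simpa using h0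

/-- A blur shift space `Σ_Λ`, with the subspace topology, is second
countable if and only if both `B₁(Λ)` and `V_Λ` are countable. -/
theorem secondCountable_iff {A : Type*} (V : Set (Set A))
    (hV : IsBlurFamily V) (Λ : Set (ℕ → A)) (hΛ : IsShiftSpace Λ) :
    @SecondCountableTopology (SigmaOf A V Λ) (subTau A V (SigmaOf A V Λ)) ↔
      (letters Λ).Countable ∧ (VLam A V Λ).Countable := by
  constructor
  · intro hs
    letI := subTau A V (SigmaOf A V Λ)
    constructor
    · choose f hf hf0 using fun a : letters Λ => exists_head hΛ a.2
      refine countable_of_sep (X := SigmaOf A V Λ)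
        (fun a : letters Λ => ⟨embed A V (f a), Or.inl ⟨f a, hf a, rfl⟩⟩)
        (fun a => Subtype.val ⁻¹' Z A V [a.1]) (fun a => isOpen_Z _ _) ?_ ?_
      · rintro a ⟨i, hi⟩
        obtain rfl : i = 0 := by simpa using hi
        exact congrArg Sum.inl (hf0 a)
      · intro a b h
        have h0 : f a 0 = b.1 := Sum.inl_injective (h ⟨0, by simp⟩)
        exact Subtype.ext ((hf0 a).symm.trans h0)
    · refine countable_of_sep (X := SigmaOf A V Λ)
        (fun H : VLam A V Λ => ⟨wordBlur [] ⟨H.1, H.2.1⟩, empty_blur_mem hΛ H⟩)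
        (fun H => Subtype.val ⁻¹' ZH A V [] ⟨H.1, H.2.1⟩ ∅)
        (fun H => isOpen_ZH _ _ _ _ (empty_subset _) finite_empty) ?_ ?_
      · intro H
        exact ⟨fun i => i.elim0, Or.inl rfl⟩
      · rintro H K ⟨-, h | ⟨a, -, h⟩⟩
        · have h' := Sum.inr_injective (h : Sum.inr _ = Sum.inr _)
          exact Subtype.ext (Subtype.mk.inj h')
        · simp [wordBlur] at h
  · rintro ⟨h1, h2⟩
    exact secondCountable_of V Λ h1 h2

end BlurPaper
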